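/- The RVS scoring matrix has the affine-equivariance property (iii): let L_1, ..., L_n : ℝ^m → ℝ be differentiable at θ, let A be an invertible real m×m matrix and a ∈ ℝ^m, set M_i(η) = L_i(A⁻¹(η − a)), U_i(θ) = ∇L_i(θ), V_i(η) = ∇M_i(η), U = Σ_i U_i(θ), V = Σ_i V_i(Aθ + a). Then for any weight λ, Σ_{i=1}^n U_i(θ) U_i(θ)ᵀ − λ n⁻¹ U Uᵀ = Aᵀ [Σ_{i=1}^n V_i(Aθ+a) V_i(Aθ+a)ᵀ − λ n⁻¹ V Vᵀ] A; that is, G(θ) = Aᵀ G_η(Aθ + a) A. -/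

import Mathlib

open Matrix Finset

/-!
By the chain rule applied to `L = M ∘ (θ ↦ Aθ + a)`, scores transform as `U = Aᵀ V`
(`score_affine`). A rank-one matrix `U Uᵀ` thus becomes `Aᵀ (V Vᵀ) A`
(`vecMulVec_transpose_mulVec`), and since `Aᵀ` commutes with summing the scores, the same holds
for every linear combination of such matrices, hence for the RVS matrix.
-/

/-- Chain rule for the individual score. -/
lemma score_affine {m : ℕ} (f : (Fin m → ℝ) → ℝ) (θ a : Fin m → ℝ)
    (A : Matrix (Fin m) (Fin m) ℝ) (hA : IsUnit A.det) (hf : DifferentiableAt ℝ f θ) :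
    (fun j => fderiv ℝ f θ (Pi.single j 1)) =
      Aᵀ *ᵥ fun j => fderiv ℝ (fun η => f (A⁻¹ *ᵥ (η - a))) (A *ᵥ θ + a) (Pi.single j 1) := by
  let B : (Fin m → ℝ) →L[ℝ] (Fin m → ℝ) := LinearMap.toContinuousLinearMap (A⁻¹).mulVecLin
  have hB : HasFDerivAt (fun η => A⁻¹ *ᵥ (η - a)) B (A *ᵥ θ + a) :=
    B.hasFDerivAt.comp (A *ᵥ θ + a) ((hasFDerivAt_id (A *ᵥ θ + a)).sub_const a)
  have hpt : A⁻¹ *ᵥ (A *ᵥ θ + a - a) = θ := by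
    rw [add_sub_cancel_right, mulVec_mulVec, nonsing_inv_mul _ hA, one_mulVec]
  have hf' : HasFDerivAt f (fderiv ℝ f θ) (A⁻¹ *ᵥ (A *ᵥ θ + a - a)) := by
    rw [hpt]; exact hf.hasFDerivAt
  have hM : fderiv ℝ (fun η => f (A⁻¹ *ᵥ (η - a))) (A *ᵥ θ + a) = (fderiv ℝ f θ).comp B :=
    (hf'.comp (A *ᵥ θ + a) hB).fderiv
  rw [hM]
  funext j
  have hBA : B (A *ᵥ Pi.single j 1) = Pi.single j 1 := by
    change A⁻¹ *ᵥ (A *ᵥ Pi.single j 1) = _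
    rw [mulVec_mulVec, nonsing_inv_mul _ hA, one_mulVec]
  -- Expand the `j`-th column of `A` in the standard basis.
  have hcol : A *ᵥ Pi.single j 1 = ∑ k, A k j • (Pi.single k 1 : Fin m → ℝ) := by
    rw [mulVec_single_one]
    exact pi_eq_sum_univ' (A.col j)
  rw [← hBA, hcol]
  simp [mulVec, dotProduct]

/-- Congruence of a rank-one matrix. -/
lemma vecMulVec_transpose_mulVec {m : ℕ} (A : Matrix (Fin m) (Fin m) ℝ) (v : Fin m → ℝ) :
    vecMulVec (Aᵀ *ᵥ v) (Aᵀ *ᵥ v) = Aᵀ * vecMulVec v v * A := by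
  rw [mul_vecMulVec, vecMulVec_mul, mulVec_transpose]

/-- Affine-equivariance (property (iii)) of the RVS scoring matrix:
G(θ) = Aᵀ G_η(Aθ + a) A under the reparametrization η = Aθ + a. -/
theorem rvs_matrix_affine_equivariant (m n : ℕ)
    (L : Fin n → (Fin m → ℝ) → ℝ) (θ a : Fin m → ℝ)
    (A : Matrix (Fin m) (Fin m) ℝ) (hA : IsUnit A.det)
    (hL : ∀ i, DifferentiableAt ℝ (L i) θ) (lam : ℝ) :
    let Ui : Fin n → Fin m → ℝ := fun i j => fderiv ℝ (L i) θ (Pi.single j 1)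
    let Vi : Fin n → Fin m → ℝ := fun i j =>
      fderiv ℝ (fun η => L i (A⁻¹ *ᵥ (η - a))) (A *ᵥ θ + a) (Pi.single j 1)
    (∑ i, vecMulVec (Ui i) (Ui i))
        - (lam * (n : ℝ)⁻¹) • vecMulVec (∑ i, Ui i) (∑ i, Ui i)
      = Aᵀ * ((∑ i, vecMulVec (Vi i) (Vi i))
          - (lam * (n : ℝ)⁻¹) • vecMulVec (∑ i, Vi i) (∑ i, Vi i)) * A := by
  intro Ui Vi
  have hU : ∀ i, Ui i = Aᵀ *ᵥ Vi i := fun i => score_affine (L i) θ a A hA (hL i)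
  have hsum : ∑ i, Ui i = Aᵀ *ᵥ ∑ i, Vi i := by
    rw [mulVec_sum]
    exact Finset.sum_congr rfl fun i _ => hU i
  rw [hsum]
  simp only [hU, vecMulVec_transpose_mulVec, Matrix.mul_sub, Matrix.sub_mul, Matrix.mul_smul,
    Matrix.smul_mul, Matrix.mul_sum, Matrix.sum_mul]
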